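/- The Borda Count social choice correspondence is k-augmentation strategyproof for every k ≥ m−2; consequently its manipulation potential satisfies Φ(Borda) ≤ m−2. -/

import Mathlib

open Finset

/-- A strict linear preference order over `m` candidates, encoded as the permutation sending
each candidate to its rank; rank `0` is the most preferred position, so
`c ≻ c'` iff `p c < p c'`. -/
abbrev Pref (m : ℕ) := Equiv.Perm (Fin m)

/-- A profile of `N` voters, each with a strict preference over `m` candidates. -/
abbrev Profile (m N : ℕ) := Fin N → Pref m

/-- A social choice correspondence: for each number `N` of voters, it maps each `N`-voter
profile to a set of (tied) winners. -/
abbrev SCC (m : ℕ) := (N : ℕ) → Profile m N → Finset (Fin m)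

/-- The profile `P` with `k` extra copies of voter `i`'s preference appended. -/
def addCopies {m n : ℕ} (P : Profile m n) (i : Fin n) (k : ℕ) : Profile m (n + k) :=
  fun j => if h : (j : ℕ) < n then P ⟨j, h⟩ else P i

/-- Break a tie among the candidates in `A` using the linear tie-breaking order `τ`:
the winner is the `τ`-maximal (lowest `τ`-rank) element of `A`. -/
noncomputable def tiebreak {m : ℕ} [NeZero m] (τ : Pref m) (A : Finset (Fin m)) : Fin m :=
  if h : A.Nonempty then τ.symm ((A.image (fun c => τ c)).min' (h.image _)) else 0

/-- `F` is `k`-augmentation strategyproof on `n`-voter profiles: for every tie-breaker `τ`,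
profile `P`, voter `i`, and alternative preference `q`, voter `i` weakly prefers the outcome
obtained by adding `k` truthful copies of her vote to the outcome of the manipulation `q`. -/
def kASP (m n : ℕ) [NeZero m] (F : SCC m) (k : ℕ) : Prop :=
  ∀ (τ : Pref m) (P : Profile m n) (i : Fin n) (q : Pref m),
    (P i) (tiebreak τ (F (n + k) (addCopies P i k))) ≤
      (P i) (tiebreak τ (F n (Function.update P i q)))

/-- The manipulation potential of `F` on `n`-voter profiles: the least `k` such that `F` is
`k'`-augmentation strategyproof for all `k' ≥ k`, and `⊤` (i.e. `∞`) if no such `k` exists. -/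
noncomputable def manipPot (m n : ℕ) [NeZero m] (F : SCC m) : ℕ∞ :=
  sInf ((fun k : ℕ => (k : ℕ∞)) '' {k : ℕ | ∀ k' : ℕ, k ≤ k' → kASP m n F k'})

/-- Borda score of candidate `c`: each voter awards `m - 1 - (rank of c)` points. -/
def bordaScore {m N : ℕ} (P : Profile m N) (c : Fin m) : ℕ :=
  ∑ i : Fin N, (m - 1 - (P i c : ℕ))

/-- Borda Count: the winners are the candidates with maximal Borda score. -/
def borda (m : ℕ) : SCC m := fun _ P =>
  Finset.univ.filter (fun c => ∀ c', bordaScore P c' ≤ bordaScore P c)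

/-!
If voter `i` strictly prefers the manipulated outcome `b` to the outcome `a` with `k` extra truthful
votes, then her `k + 1` truthful votes give `b` a lead over `a` of at least `k + 1 ≥ m - 1` points,
while a single ballot never gives `b` a lead of more than `m - 1`. The other voters contribute the
same to both elections, so `b` fares against `a` at least as well in the truthful election, won by
`a`, as in the manipulated one, won by `b`. Hence `a` and `b` are tied for the win in both
elections, and a tie-breaker cannot choose differently between them.
-/

theorem tiebreak_mem {m : ℕ} [NeZero m] (τ : Pref m) {A : Finset (Fin m)} (hA : A.Nonempty) :
    tiebreak τ A ∈ A := by
  obtain ⟨c, hc, hmin⟩ := mem_image.mp ((A.image fun c => τ c).min'_mem (hA.image _))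
  rwa [tiebreak, dif_pos hA, ← hmin, Equiv.symm_apply_apply]

theorem apply_tiebreak_le {m : ℕ} [NeZero m] (τ : Pref m) {A : Finset (Fin m)} {c : Fin m}
    (hc : c ∈ A) : τ (tiebreak τ A) ≤ τ c := by
  rw [tiebreak, dif_pos ⟨c, hc⟩, Equiv.apply_symm_apply]
  exact min'_le _ _ (mem_image_of_mem _ hc)

theorem tiebreak_eq_tiebreak {m : ℕ} [NeZero m] {τ : Pref m} {A B : Finset (Fin m)}
    (hA : tiebreak τ A ∈ B) (hB : tiebreak τ B ∈ A) : tiebreak τ A = tiebreak τ B :=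
  τ.injective ((apply_tiebreak_le τ hB).antisymm (apply_tiebreak_le τ hA))

theorem manipPot_le {m n : ℕ} [NeZero m] {F : SCC m} {K : ℕ} (hF : ∀ k, K ≤ k → kASP m n F k) :
    manipPot m n F ≤ K :=
  sInf_le ⟨K, hF, rfl⟩

section Borda

variable {m n N M k : ℕ}

theorem mem_borda {P : Profile m N} {c : Fin m} :
    c ∈ borda m N P ↔ ∀ d, bordaScore P d ≤ bordaScore P c := by
  simp [borda]

theorem borda_nonempty [NeZero m] (P : Profile m N) : (borda m N P).Nonempty := by
  obtain ⟨c, hc⟩ := Finite.exists_max (bordaScore P)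
  exact ⟨c, mem_borda.mpr hc⟩

/- `hab` compares the leads of `b` over `a` in `P` and `Q`, rearranged to avoid truncated
subtraction. -/
theorem mem_borda_of_score_add_le {P : Profile m N} {Q : Profile m M} {a b : Fin m}
    (ha : a ∈ borda m N P) (hb : b ∈ borda m M Q)
    (hab : bordaScore P a + bordaScore Q b ≤ bordaScore P b + bordaScore Q a) :
    a ∈ borda m M Q ∧ b ∈ borda m N P := by
  rw [mem_borda] at ha hb
  have tied_P : bordaScore P b = bordaScore P a := by linarith [ha b, hb a]
  have tied_Q : bordaScore Q a = bordaScore Q b := by linarith [ha b, hb a]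
  exact ⟨mem_borda.mpr (tied_Q ▸ hb), mem_borda.mpr (tied_P ▸ ha)⟩

theorem addCopies_castAdd (P : Profile m n) (i : Fin n) (k : ℕ) (j : Fin n) :
    addCopies P i k (Fin.castAdd k j) = P j := by
  simp [addCopies]

theorem addCopies_natAdd (P : Profile m n) (i : Fin n) (k : ℕ) (j : Fin k) :
    addCopies P i k (Fin.natAdd n j) = P i := by
  simp [addCopies]

theorem bordaScore_addCopies (P : Profile m n) (i : Fin n) (k : ℕ) (c : Fin m) :
    bordaScore (addCopies P i k) c = bordaScore P c + k * (m - 1 - (P i c : ℕ)) := by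
  simp only [bordaScore, Fin.sum_univ_add, addCopies_castAdd, addCopies_natAdd, Fin.sum_const,
    smul_eq_mul]

theorem bordaScore_update_add (P : Profile m n) (i : Fin n) (q : Pref m) (c : Fin m) :
    bordaScore (Function.update P i q) c + (m - 1 - (P i c : ℕ)) =
      bordaScore P c + (m - 1 - (q c : ℕ)) := by
  have others : ∑ j ∈ univ.erase i, (m - 1 - (Function.update P i q j c : ℕ)) =
      ∑ j ∈ univ.erase i, (m - 1 - (P j c : ℕ)) :=
    sum_congr rfl fun j hj => by rw [Function.update_of_ne (ne_of_mem_erase hj)]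
  simp only [bordaScore, ← sum_erase_add _ _ (mem_univ i), others, Function.update_self]
  ring

theorem bordaScore_addCopies_add_update_le {P : Profile m n} {i : Fin n} {a b : Fin m}
    (hk : m ≤ k + 2) (q : Pref m) (hba : P i b < P i a) :
    bordaScore (addCopies P i k) a + bordaScore (Function.update P i q) b ≤
      bordaScore (addCopies P i k) b + bordaScore (Function.update P i q) a := by
  have truthful_lead : m - 1 - (P i a : ℕ) + 1 ≤ m - 1 - (P i b : ℕ) := by omega
  have copies_lead : k * (m - 1 - (P i a : ℕ)) + k ≤ k * (m - 1 - (P i b : ℕ)) :=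
    Nat.mul_le_mul_left k truthful_lead
  have ballot_lead : m - 1 - (q b : ℕ) ≤ k + 1 := by omega
  rw [bordaScore_addCopies, bordaScore_addCopies]
  linarith [bordaScore_update_add P i q a, bordaScore_update_add P i q b]

theorem kASP_borda [NeZero m] (hk : m ≤ k + 2) : kASP m n (borda m) k := by
  intro τ P i q
  by_contra! manipulation
  obtain ⟨ha, hb⟩ := mem_borda_of_score_add_le
    (tiebreak_mem τ (borda_nonempty (addCopies P i k)))
    (tiebreak_mem τ (borda_nonempty (Function.update P i q)))
    (bordaScore_addCopies_add_update_le hk q manipulation)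
  exact manipulation.ne (congrArg (P i) (tiebreak_eq_tiebreak hb ha))

end Borda

/-- Borda Count is `k`-augmentation strategyproof for every `k ≥ m − 2`;
consequently `Φ(Borda) ≤ m − 2`. -/
theorem borda_kASP_of_le (m n : ℕ) [NeZero m] (hm : 3 ≤ m) (hn : 2 ≤ n) :
    (∀ k : ℕ, m - 2 ≤ k → kASP m n (borda m) k) ∧
      manipPot m n (borda m) ≤ ((m - 2 : ℕ) : ℕ∞) := by
  have hkASP : ∀ k, m - 2 ≤ k → kASP m n (borda m) k := fun _ hk =>
    kASP_borda (tsub_le_iff_right.mp hk)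
  exact ⟨hkASP, manipPot_le hkASP⟩
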